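/- arXiv:2307.07809 — 3 statements merged into one kernel-verified Lean document; each statement's English description precedes it below -/
import Mathlib

section
/- Let m and ℓ be positive integers. There exists a group isomorphism f : G(m,ℓ) → G(ℓ,m) such that for every i ∈ {0,…,m−1}, the image f(a_i) of the generator a_i of G(m,ℓ) is conjugate in G(ℓ,m) to one of the generators b_0,…,b_{ℓ−1} of G(ℓ,m). -/
/-- The word `a_i a_{i+1} ⋯ a_{i+p-1}` (indices mod `m`) in the free group on `ZMod m`. -/
def circWord (m : ℕ) (i : ZMod m) (p : ℕ) : FreeGroup (ZMod m) :=
  ((List.range p).map (fun k => FreeGroup.of (i + (k : ZMod m)))).prod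

/-- The defining relations of the circular group `G(m,ℓ)`. -/
def circRels (m ℓ : ℕ) : Set (FreeGroup (ZMod m)) :=
  { r | ∃ i : ZMod m, r = circWord m i ℓ * (circWord m (i + 1) ℓ)⁻¹ }

/-- The circular group `G(m,ℓ)`. -/
abbrev CircularGroup (m ℓ : ℕ) := PresentedGroup (circRels m ℓ)

/-- The generator `a_i` of the circular group `G(m,ℓ)`. -/
def circGen (m ℓ : ℕ) (i : ZMod m) : CircularGroup m ℓ :=
  PresentedGroup.of i

/-- The element `s(i,p) = a_i a_{i+1} ⋯ a_{i+p-1}` of the circular group `G(m,ℓ)`. -/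
def circS (m ℓ : ℕ) (i : ZMod m) (p : ℕ) : CircularGroup m ℓ :=
  ((List.range p).map (fun k => circGen m ℓ (i + (k : ZMod m)))).prod

/-- The Garside element `Δ = s(0,ℓ)` of the circular group `G(m,ℓ)`. -/
def circDelta (m ℓ : ℕ) : CircularGroup m ℓ := circS m ℓ 0 ℓ

theorem circS_eq_prod (m ℓ : ℕ) (i : ZMod m) (p : ℕ) :
    circS m ℓ i p = ((List.range p).map fun k : ℕ => circGen m ℓ (i + (k : ZMod m))).prod := by
  simp [circS, List.map_eq_flatMap, List.flatMap_assoc]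

theorem circWord_eq_prod (m : ℕ) (i : ZMod m) (p : ℕ) :
    circWord m i p = ((List.range p).map fun k : ℕ => FreeGroup.of (i + (k : ZMod m))).prod := by
  simp [circWord, List.map_eq_flatMap, List.flatMap_assoc]

theorem circS_zero (m ℓ : ℕ) (i : ZMod m) : circS m ℓ i 0 = 1 := by
  simp [circS]

theorem circS_one (m ℓ : ℕ) (i : ZMod m) : circS m ℓ i 1 = circGen m ℓ i := by
  simp [circS]

theorem circS_add (m ℓ : ℕ) (i : ZMod m) (p q : ℕ) :
    circS m ℓ i (p + q) = circS m ℓ i p * circS m ℓ (i + p) q := by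
  simp [circS_eq_prod, List.range_add, Function.comp_def, add_assoc]

theorem mk_circWord (m ℓ : ℕ) (i : ZMod m) (p : ℕ) :
    PresentedGroup.mk (circRels m ℓ) (circWord m i p) = circS m ℓ i p := by
  simp only [circWord_eq_prod, circS_eq_prod, map_list_prod, List.map_map]
  rfl

theorem circS_length_succ (m ℓ : ℕ) (i : ZMod m) :
    circS m ℓ (i + 1) ℓ = circS m ℓ i ℓ := by
  have h := PresentedGroup.one_of_mem (rels := circRels m ℓ) ⟨i, rfl⟩
  rw [map_mul, map_inv, mk_circWord, mk_circWord, mul_inv_eq_one] at h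
  exact h.symm

theorem circS_length (m ℓ : ℕ) (i : ZMod m) : circS m ℓ i ℓ = circDelta m ℓ := by
  obtain ⟨k, rfl⟩ := ZMod.intCast_surjective i
  induction k using Int.induction_on with
  | zero => simp [circDelta]
  | succ k ih => rw [← ih]; push_cast; exact circS_length_succ m ℓ _
  | pred k ih => rw [← ih, ← circS_length_succ]; push_cast; simp

theorem circS_mul_length (m ℓ : ℕ) (i : ZMod m) (N : ℕ) :
    circS m ℓ i (N * ℓ) = circDelta m ℓ ^ N := by
  induction N with
  | zero => simp [circS_zero]
  | succ N ih => rw [Nat.succ_mul, circS_add, ih, circS_length, pow_succ]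

/-- The product `a_{-n} ⋯ a_{-1}` in the circular group `G(m,ℓ)`. -/
def circBack (m ℓ n : ℕ) : CircularGroup m ℓ := circS m ℓ (-(n : ZMod m)) n

theorem circBack_succ (m ℓ n : ℕ) :
    circBack m ℓ (n + 1) = circGen m ℓ (-(n : ZMod m) - 1) * circBack m ℓ n := by
  rw [circBack, circBack, add_comm n 1, circS_add, circS_one]
  congr 2 <;> push_cast <;> ring

theorem circBack_add_length (m ℓ n : ℕ) :
    circBack m ℓ (n + ℓ) = circDelta m ℓ * circBack m ℓ n := by
  rw [circBack, circBack, add_comm n ℓ, circS_add, circS_length]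
  congr 2
  push_cast
  ring

theorem circBack_add_period (m ℓ n : ℕ) :
    circBack m ℓ (n + m) = circBack m ℓ n * circS m ℓ 0 m := by
  rw [circBack, circBack, circS_add]
  simp

/-- The image `(b_{-n} ⋯ b_{-1})⁻¹ (b_{-n-1} ⋯ b_{-1})` in `G(ℓ,m)` of the generator `a_n`
of `G(m,ℓ)`. -/
def circSwapGen (m ℓ n : ℕ) : CircularGroup ℓ m :=
  (circBack ℓ m n)⁻¹ * circBack ℓ m (n + 1)

theorem circSwapGen_periodic (m ℓ : ℕ) : Function.Periodic (circSwapGen m ℓ) m := by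
  intro n
  rw [circSwapGen, circSwapGen, add_right_comm, circBack_add_length, circBack_add_length]
  group

theorem circSwapGen_val_natCast (m ℓ n : ℕ) :
    circSwapGen m ℓ (n : ZMod m).val = circSwapGen m ℓ n := by
  rw [ZMod.val_natCast, (circSwapGen_periodic m ℓ).map_mod_nat]

theorem prod_circSwapGen (m ℓ n p : ℕ) :
    ((List.range p).map fun k => circSwapGen m ℓ (n + k)).prod =
      (circBack ℓ m n)⁻¹ * circBack ℓ m (n + p) := by
  induction p with
  | zero => simp
  | succ p ih =>
    rw [List.range_succ, List.map_append, List.prod_append, ih]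
    simp [circSwapGen, add_assoc]

theorem lift_circSwapGen_circWord (m ℓ n p : ℕ) :
    FreeGroup.lift (fun i : ZMod m => circSwapGen m ℓ i.val) (circWord m n p) =
      (circBack ℓ m n)⁻¹ * circBack ℓ m (n + p) := by
  rw [← prod_circSwapGen, circWord_eq_prod, map_list_prod, List.map_map]
  congr 2
  funext k
  simp only [Function.comp_apply, FreeGroup.lift_apply_of]
  rw [← Nat.cast_add, circSwapGen_val_natCast]

theorem lift_circSwapGen_circRels (m ℓ : ℕ) [NeZero m] :
    ∀ r ∈ circRels m ℓ,
      FreeGroup.lift (fun i : ZMod m => circSwapGen m ℓ i.val) r = 1 := by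
  rintro r ⟨i, rfl⟩
  obtain ⟨n, rfl⟩ := ZMod.natCast_zmod_surjective i
  rw [map_mul, map_inv, ← Nat.cast_succ, lift_circSwapGen_circWord,
    lift_circSwapGen_circWord, circBack_add_period, circBack_add_period]
  group

/-- The homomorphism `G(m,ℓ) → G(ℓ,m)` exchanging the roles of the two parameters. -/
def circSwap (m ℓ : ℕ) [NeZero m] : CircularGroup m ℓ →* CircularGroup ℓ m :=
  PresentedGroup.toGroup (lift_circSwapGen_circRels m ℓ)

theorem circSwap_circGen (m ℓ : ℕ) [NeZero m] (n : ℕ) :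
    circSwap m ℓ (circGen m ℓ n) = circSwapGen m ℓ n := by
  rw [circSwap, circGen, PresentedGroup.toGroup.of, circSwapGen_val_natCast]

theorem circSwap_circS (m ℓ : ℕ) [NeZero m] (n p : ℕ) :
    circSwap m ℓ (circS m ℓ n p) = (circBack ℓ m n)⁻¹ * circBack ℓ m (n + p) := by
  rw [← mk_circWord, ← lift_circSwapGen_circWord]
  rfl

theorem circSwap_circBack (m ℓ : ℕ) [NeZero m] (n : ℕ) :
    circSwap m ℓ (circBack m ℓ n) = circS ℓ m 0 n := by
  obtain ⟨k, hk⟩ := Nat.exists_eq_add_of_le' (Nat.le_mul_of_pos_right n (NeZero.pos m))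
  have hcast : -(n : ZMod m) = (k : ZMod m) := by
    have h := congrArg (Nat.cast : ℕ → ZMod m) hk
    push_cast at h
    rw [ZMod.natCast_self, mul_zero] at h
    exact (eq_neg_of_add_eq_zero_left h.symm).symm
  rw [circBack, hcast, circSwap_circS, inv_mul_eq_iff_eq_mul, ← hk, circBack,
    circS_mul_length, ← circS_mul_length ℓ m (-(k : ZMod ℓ)), hk, circS_add, circBack]
  simp

theorem circSwap_comp_circSwap (m ℓ : ℕ) [NeZero m] [NeZero ℓ] :
    (circSwap ℓ m).comp (circSwap m ℓ) = MonoidHom.id _ := by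
  refine PresentedGroup.ext fun i => ?_
  obtain ⟨n, rfl⟩ := ZMod.natCast_zmod_surjective i
  change circSwap ℓ m (circSwap m ℓ (circGen m ℓ n)) = circGen m ℓ n
  rw [circSwap_circGen, circSwapGen, map_mul, map_inv, circSwap_circBack,
    circSwap_circBack, circS_add, circS_one]
  simp

theorem isConj_circSwapGen (m ℓ n : ℕ) :
    IsConj (circGen ℓ m (-(n : ZMod ℓ) - 1)) (circSwapGen m ℓ n) := by
  refine isConj_iff.2 ⟨(circBack ℓ m n)⁻¹, ?_⟩
  rw [circSwapGen, circBack_succ]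
  group

/-- There is a group isomorphism `G(m,ℓ) ≃ G(ℓ,m)` sending each generator `a_i` of
`G(m,ℓ)` to a conjugate of one of the generators `b_j` of `G(ℓ,m)`. -/
theorem isomorphism_circular_group (m ℓ : ℕ) (hm : 0 < m) (hℓ : 0 < ℓ) :
    ∃ f : CircularGroup m ℓ ≃* CircularGroup ℓ m,
      ∀ i : ZMod m, ∃ j : ZMod ℓ, IsConj (circGen ℓ m j) (f (circGen m ℓ i)) := by
  have : NeZero m := ⟨hm.ne'⟩
  have : NeZero ℓ := ⟨hℓ.ne'⟩
  refine ⟨(circSwap m ℓ).toMulEquiv (circSwap ℓ m) (circSwap_comp_circSwap m ℓ)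
    (circSwap_comp_circSwap ℓ m), fun i => ?_⟩
  obtain ⟨n, rfl⟩ := ZMod.natCast_zmod_surjective i
  refine ⟨-(n : ZMod ℓ) - 1, ?_⟩
  rw [MonoidHom.toMulEquiv_apply, circSwap_circGen]
  exact isConj_circSwapGen m ℓ n
end

section
/- Let m be a positive integer. The group G(m,m) is isomorphic to ℤ × F_{m−1}, where F_{m−1} is the free group on m−1 generators, via an isomorphism that sends Δ = s(0,m) = a_0 a_1 ⋯ a_{m−1} to (z,1), where z is a generator of the factor ℤ. -/
section CyclicProducts

variable {H : Type*} [Group H]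

/-- The product `g i * g (i+1) * ⋯ * g (i+p-1)`, with indices modulo `m`. -/
def cyclicProd {m : ℕ} (g : ZMod m → H) (i : ZMod m) (p : ℕ) : H :=
  ((List.range p).map (fun k : ℕ => g (i + (k : ZMod m)))).prod

lemma map_cyclicProd {K F : Type*} [Group K] [FunLike F H K] [MonoidHomClass F H K] {m : ℕ}
    (φ : F) (g : ZMod m → H) (i : ZMod m) (p : ℕ) :
    φ (cyclicProd g i p) = cyclicProd (fun j => φ (g j)) i p := by
  simp [cyclicProd, map_list_prod, Function.comp_def]

/-- Shifting the starting point of a full cyclic product conjugates it. -/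
lemma cyclicProd_mul_eq {m : ℕ} (g : ZMod m → H) (i : ZMod m) :
    cyclicProd g i m * g i = g i * cyclicProd g (i + 1) m := by
  have h₁ : cyclicProd g i (m + 1) = cyclicProd g i m * g i := by
    simp [cyclicProd, List.prod_range_succ]
  have h₂ : cyclicProd g i (m + 1) = g i * cyclicProd g (i + 1) m := by
    simp [cyclicProd, List.prod_range_succ', add_assoc, add_comm (1 : ZMod m)]
  rw [← h₁, h₂]

/-- A function on `ZMod m` that is invariant under `i ↦ i + 1` is constant. -/
lemma ZMod.eq_zero_apply_of_forall_add_one {α : Type*} {m : ℕ} (P : ZMod m → α)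
    (h : ∀ i, P i = P (i + 1)) (i : ZMod m) : P i = P 0 := by
  have hint : ∀ k : ℤ, P k = P 0 := fun k => by
    induction k using Int.induction_on with
    | zero => simp
    | succ k ih => rw [← ih, Int.cast_add, Int.cast_one, ← h]
    | pred k ih => rw [← ih, h]; congr 1; push_cast; ring
  simpa using hint (i.cast : ℤ)

lemma cyclicProd_zero_succ {n : ℕ} (g : ZMod (n + 1) → H) :
    cyclicProd g 0 (n + 1) =
      (List.ofFn fun j : Fin n => g ((j : ℕ) : ZMod (n + 1))).prod * g (n : ZMod (n + 1)) := by
  have h : (List.range n).map (fun k : ℕ => g (0 + (k : ZMod (n + 1)))) =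
      List.ofFn fun j : Fin n => g ((j : ℕ) : ZMod (n + 1)) := by
    apply List.ext_getElem <;> simp
  rw [cyclicProd, List.prod_range_succ, h, zero_add]

end CyclicProducts

lemma circDelta_eq_cyclicProd (m ℓ : ℕ) :
    circDelta m ℓ = cyclicProd (circGen m ℓ) 0 ℓ := by
  simp [circDelta, circS, cyclicProd, ← List.map_eq_flatMap, Function.comp_def]

lemma circWord_eq_cyclicProd (m : ℕ) (i : ZMod m) (p : ℕ) :
    circWord m i p = cyclicProd FreeGroup.of i p := by
  simp [circWord, cyclicProd, ← List.map_eq_flatMap, Function.comp_def]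

lemma cyclicProd_circGen_add_one (m ℓ : ℕ) (i : ZMod m) :
    cyclicProd (circGen m ℓ) i ℓ = cyclicProd (circGen m ℓ) (i + 1) ℓ := by
  have h := PresentedGroup.one_of_mem (rels := circRels m ℓ) ⟨i, rfl⟩
  rw [map_mul, map_inv, mul_inv_eq_one] at h
  have hw : ∀ i : ZMod m, PresentedGroup.mk (circRels m ℓ) (circWord m i ℓ) =
      cyclicProd (circGen m ℓ) i ℓ := fun i => by
    rw [circWord_eq_cyclicProd]
    exact map_cyclicProd (PresentedGroup.mk (circRels m ℓ)) FreeGroup.of i ℓ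
  rwa [hw, hw] at h

/-- In `G(m,m)`, the element `Δ` is central. -/
lemma commute_circDelta (m : ℕ) (x : CircularGroup m m) : Commute (circDelta m m) x := by
  suffices h : (⊤ : Subgroup (CircularGroup m m)) ≤ Subgroup.centralizer {circDelta m m} from
    (Subgroup.mem_centralizer_singleton_iff.mp (h (Subgroup.mem_top x))).symm
  rw [← PresentedGroup.closure_range_of, Subgroup.closure_le]
  rintro _ ⟨i, rfl⟩
  have hi := ZMod.eq_zero_apply_of_forall_add_one _ (cyclicProd_circGen_add_one m m)
  have h := cyclicProd_mul_eq (circGen m m) i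
  rw [hi i, hi (i + 1), ← circDelta_eq_cyclicProd] at h
  exact Subgroup.mem_centralizer_singleton_iff.mpr h.symm

/-- If one full cyclic product is central, then all full cyclic products agree. -/
lemma cyclicProd_eq_of_central {H : Type*} [Group H] {m : ℕ} (g : ZMod m → H)
    (hg : ∀ x, Commute (cyclicProd g 0 m) x) (i : ZMod m) :
    cyclicProd g i m = cyclicProd g 0 m := by
  refine (ZMod.eq_zero_apply_of_forall_add_one
    (fun i => cyclicProd g i m = cyclicProd g 0 m) (fun i => propext ?_) i).mpr rfl
  have h := cyclicProd_mul_eq g i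
  constructor <;> intro hi <;> rw [hi] at h
  · exact (mul_left_cancel ((hg (g i)).eq.symm.trans h)).symm
  · exact mul_right_cancel (h.trans (hg (g i)).eq.symm)

/-- A family whose full cyclic product is central induces a homomorphism from `G(m,m)`. -/
def circLift {H : Type*} [Group H] {m : ℕ} (g : ZMod m → H)
    (hg : ∀ x, Commute (cyclicProd g 0 m) x) : CircularGroup m m →* H :=
  PresentedGroup.toGroup (f := g) <| by
    rintro _ ⟨i, rfl⟩
    have hw : ∀ i : ZMod m, FreeGroup.lift g (circWord m i m) = cyclicProd g i m := fun i => by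
      simp [circWord_eq_cyclicProd, map_cyclicProd]
    rw [map_mul, map_inv, hw, hw, cyclicProd_eq_of_central g hg i,
      cyclicProd_eq_of_central g hg (i + 1), mul_inv_cancel]

lemma circLift_circGen {H : Type*} [Group H] {m : ℕ} (g : ZMod m → H)
    (hg : ∀ x, Commute (cyclicProd g 0 m) x) (i : ZMod m) :
    circLift g hg (circGen m m i) = g i :=
  PresentedGroup.toGroup.of _

/-- The images in `ℤ × F_n` of the generators of `G(n+1,n+1)`. -/
def intProdFreeGen (n : ℕ) (i : ZMod (n + 1)) : Multiplicative ℤ × FreeGroup (Fin n) :=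
  if h : i.val < n then (1, FreeGroup.of ⟨i.val, h⟩)
  else (Multiplicative.ofAdd 1, (List.ofFn FreeGroup.of).prod⁻¹)

lemma intProdFreeGen_of_lt {n : ℕ} (j : Fin n) :
    intProdFreeGen n ((j : ℕ) : ZMod (n + 1)) = (1, FreeGroup.of j) := by
  have h : ((j : ℕ) : ZMod (n + 1)).val = j := ZMod.val_natCast_of_lt (by omega)
  simp [intProdFreeGen, h]

lemma intProdFreeGen_last (n : ℕ) :
    intProdFreeGen n (n : ZMod (n + 1)) =
      (Multiplicative.ofAdd 1, (List.ofFn FreeGroup.of).prod⁻¹) := by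
  have h : (n : ZMod (n + 1)).val = n := ZMod.val_natCast_of_lt (by omega)
  simp [intProdFreeGen, h]

lemma cyclicProd_intProdFreeGen (n : ℕ) :
    cyclicProd (intProdFreeGen n) 0 (n + 1) = (Multiplicative.ofAdd 1, 1) := by
  have h : (List.ofFn fun j : Fin n => intProdFreeGen n ((j : ℕ) : ZMod (n + 1))).prod =
      MonoidHom.inr (Multiplicative ℤ) _ (List.ofFn FreeGroup.of).prod := by
    simp only [intProdFreeGen_of_lt, map_list_prod, List.map_ofFn]
    rfl
  rw [cyclicProd_zero_succ, h, intProdFreeGen_last]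
  simp

/-- The homomorphism `G(n+1,n+1) → ℤ × F_n`. -/
def circToIntProdFree (n : ℕ) :
    CircularGroup (n + 1) (n + 1) →* Multiplicative ℤ × FreeGroup (Fin n) :=
  circLift (intProdFreeGen n) fun x => by
    rw [cyclicProd_intProdFreeGen]
    exact Prod.ext (mul_comm _ _) (Commute.one_left x.2)

lemma circToIntProdFree_circGen (n : ℕ) (i : ZMod (n + 1)) :
    circToIntProdFree n (circGen _ _ i) = intProdFreeGen n i :=
  circLift_circGen ..

lemma circToIntProdFree_circDelta (n : ℕ) :
    circToIntProdFree n (circDelta _ _) = (Multiplicative.ofAdd 1, 1) := by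
  rw [circDelta_eq_cyclicProd, map_cyclicProd]
  simp only [circToIntProdFree_circGen, cyclicProd_intProdFreeGen]

/-- The homomorphism `ℤ × F_n → G(n+1,n+1)` sending the generator of `ℤ` to `Δ`. -/
def intProdFreeToCirc (n : ℕ) :
    Multiplicative ℤ × FreeGroup (Fin n) →* CircularGroup (n + 1) (n + 1) :=
  (zpowersHom _ (circDelta (n + 1) (n + 1))).noncommCoprod
    (FreeGroup.lift fun j : Fin n => circGen (n + 1) (n + 1) (j : ℕ))
    fun z _ => (commute_circDelta (n + 1) _).zpow_left z.toAdd

lemma intProdFreeToCirc_apply (n : ℕ) (p : Multiplicative ℤ × FreeGroup (Fin n)) :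
    intProdFreeToCirc n p = circDelta (n + 1) (n + 1) ^ p.1.toAdd *
      FreeGroup.lift (fun j : Fin n => circGen (n + 1) (n + 1) (j : ℕ)) p.2 :=
  rfl

lemma circToIntProdFree_lift (n : ℕ) (w : FreeGroup (Fin n)) :
    circToIntProdFree n
      (FreeGroup.lift (fun j : Fin n => circGen (n + 1) (n + 1) (j : ℕ)) w) = (1, w) := by
  have h : (circToIntProdFree n).comp
      (FreeGroup.lift fun j : Fin n => circGen (n + 1) (n + 1) (j : ℕ)) =
      MonoidHom.inr (Multiplicative ℤ) (FreeGroup (Fin n)) :=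
    FreeGroup.ext_hom _ _ fun j => by
      simp [circToIntProdFree_circGen, intProdFreeGen_of_lt]
  exact DFunLike.congr_fun h w

lemma intProdFreeToCirc_intProdFreeGen (n : ℕ) (i : ZMod (n + 1)) :
    intProdFreeToCirc n (intProdFreeGen n i) = circGen _ _ i := by
  rw [← ZMod.natCast_zmod_val i]
  obtain hi | hi := (Nat.lt_succ_iff_lt_or_eq.mp i.val_lt)
  · have h := intProdFreeGen_of_lt ⟨i.val, hi⟩
    rw [h]
    simp [intProdFreeToCirc_apply]
  · rw [hi]
    have h := cyclicProd_zero_succ (circGen (n + 1) (n + 1))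
    rw [← circDelta_eq_cyclicProd] at h
    simp only [intProdFreeGen_last, intProdFreeToCirc_apply, map_inv,
      map_list_prod, List.map_ofFn, Function.comp_def, FreeGroup.lift_apply_of,
      toAdd_ofAdd, zpow_one]
    rw [(commute_circDelta (n + 1) _).eq, inv_mul_eq_iff_eq_mul]
    exact h

/-- The isomorphism `G(n+1,n+1) ≃ ℤ × F_n`. -/
def circEquivIntProdFree (n : ℕ) :
    CircularGroup (n + 1) (n + 1) ≃* Multiplicative ℤ × FreeGroup (Fin n) :=
  MonoidHom.toMulEquiv (circToIntProdFree n) (intProdFreeToCirc n)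
    (PresentedGroup.ext fun i => by
      change intProdFreeToCirc n (circToIntProdFree n (circGen _ _ i)) = circGen _ _ i
      rw [circToIntProdFree_circGen, intProdFreeToCirc_intProdFreeGen])
    (MonoidHom.ext fun p => by
      rw [MonoidHom.comp_apply, intProdFreeToCirc_apply, map_mul, map_zpow,
        circToIntProdFree_circDelta, circToIntProdFree_lift, MonoidHom.id_apply]
      ext <;> simp [← ofAdd_zsmul])

/-- `G(m,m)` is isomorphic to `ℤ × F_{m-1}` via an isomorphism sending
`Δ = s(0,m)` to `(z, 1)` where `z` is a generator of `ℤ`. -/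
theorem circular_group_m_m (m : ℕ) (hm : 0 < m) :
    ∃ f : CircularGroup m m ≃* Multiplicative ℤ × FreeGroup (Fin (m - 1)),
      f (circDelta m m) = (Multiplicative.ofAdd (1 : ℤ), 1) := by
  obtain ⟨n, rfl⟩ := Nat.exists_eq_succ_of_ne_zero hm.ne'
  exact ⟨circEquivIntProdFree n, circToIntProdFree_circDelta n⟩
end

section
/- Let m and ℓ be positive integers, let i, i′ ∈ {0,…,m−1} and p, p′ ∈ {0,…,ℓ}. Assume that in M(m,ℓ) neither s(i,p) left-divides s(i′,p′) nor s(i′,p′) left-divides s(i,p). Then: (1) the only common left-divisor of s(i,p) and s(i′,p′) in M(m,ℓ) is 1; and (2) Δ = s(0,ℓ) is a common right-multiple of s(i,p) and s(i′,p′), and every common right-multiple of s(i,p) and s(i′,p′) in M(m,ℓ) is left-divisible by Δ. -/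
/-- The word `a_i a_{i+1} ⋯ a_{i+p-1}` (indices mod `m`) in the free monoid on `ZMod m`. -/
def circMWord (m : ℕ) (i : ZMod m) (p : ℕ) : FreeMonoid (ZMod m) :=
  ((List.range p).map (fun k => FreeMonoid.of (i + (k : ZMod m)))).prod

/-- The defining relations of the circular monoid `M(m,ℓ)`. -/
def circMRels (m ℓ : ℕ) : FreeMonoid (ZMod m) → FreeMonoid (ZMod m) → Prop :=
  fun x y => ∃ i : ZMod m, x = circMWord m i ℓ ∧ y = circMWord m (i + 1) ℓ

/-- The circular monoid `M(m,ℓ)`. -/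
abbrev CircularMonoid (m ℓ : ℕ) := PresentedMonoid (circMRels m ℓ)

/-- The element `s(i,p) = a_i a_{i+1} ⋯ a_{i+p-1}` of the circular monoid `M(m,ℓ)`. -/
def circMS (m ℓ : ℕ) (i : ZMod m) (p : ℕ) : CircularMonoid m ℓ :=
  PresentedMonoid.mk (circMRels m ℓ) (circMWord m i p)

/-- The Garside element `Δ = s(0,ℓ)` of the circular monoid `M(m,ℓ)`. -/
def circMDelta (m ℓ : ℕ) : CircularMonoid m ℓ := circMS m ℓ 0 ℓ

theorem circMWord_add (m : ℕ) (i : ZMod m) (p q : ℕ) :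
    circMWord m i (p + q) = circMWord m i p * circMWord m (i + p) q := by
  simp [circMWord, List.range_add, ← List.map_eq_flatMap, Function.comp_def, add_assoc]

theorem toList_circMWord (m : ℕ) (i : ZMod m) (p : ℕ) :
    (circMWord m i p).toList = (List.range p).map (fun k => i + (k : ZMod m)) := by
  induction p with
  | zero => simp [circMWord]
  | succ p ih =>
    rw [circMWord_add, FreeMonoid.toList_mul, ih]
    simp [circMWord, List.range_succ]

theorem length_circMWord (m : ℕ) (i : ZMod m) (p : ℕ) :
    (circMWord m i p).toList.length = p := by
  simp [toList_circMWord]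

theorem head?_circMWord (m : ℕ) (i : ZMod m) {p : ℕ} (hp : 0 < p) :
    (circMWord m i p).toList.head? = some i := by
  obtain ⟨q, rfl⟩ := Nat.exists_eq_succ_of_ne_zero hp.ne'
  simp [toList_circMWord, List.range_succ_eq_map]

theorem circMS_add (m ℓ : ℕ) (i : ZMod m) (p q : ℕ) :
    circMS m ℓ i (p + q) = circMS m ℓ i p * circMS m ℓ (i + p) q := by
  simp [circMS, circMWord_add]

theorem circMS_zero (m ℓ : ℕ) (i : ZMod m) : circMS m ℓ i 0 = 1 := by
  simp [circMS, circMWord]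

theorem circMS_dvd_circMS (m ℓ : ℕ) (i : ZMod m) {p q : ℕ} (h : p ≤ q) :
    circMS m ℓ i p ∣ circMS m ℓ i q := by
  obtain ⟨r, rfl⟩ := Nat.exists_eq_add_of_le h
  exact ⟨_, circMS_add m ℓ i p r⟩

theorem circMS_succ_length (m ℓ : ℕ) (i : ZMod m) :
    circMS m ℓ i ℓ = circMS m ℓ (i + 1) ℓ :=
  PresentedMonoid.mk_eq_mk_of_rel ⟨i, rfl, rfl⟩

/-- Every simple element of full length is the Garside element. -/
theorem circMS_length_eq_circMDelta (m ℓ : ℕ) [NeZero m] (i : ZMod m) :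
    circMS m ℓ i ℓ = circMDelta m ℓ := by
  have key : ∀ n : ℕ, circMS m ℓ (n : ZMod m) ℓ = circMDelta m ℓ := by
    intro n
    induction n with
    | zero => simp [circMDelta]
    | succ n ih => rw [Nat.cast_succ, ← circMS_succ_length, ih]
  simpa using key i.val

/-- A word shorter than the defining relations is alone in its class. -/
theorem eq_of_mk_eq_of_length_lt {m ℓ : ℕ} {v w : FreeMonoid (ZMod m)}
    (h : PresentedMonoid.mk (circMRels m ℓ) v = PresentedMonoid.mk (circMRels m ℓ) w)
    (hw : w.toList.length < ℓ) : v = w := by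
  have key : v = w ∨ (ℓ ≤ v.toList.length ∧ v.toList.length = w.toList.length) := by
    clear hw
    have h' := PresentedMonoid.mk_eq_mk_iff.1 h
    clear h
    induction h' with
    | of x y h =>
      obtain ⟨i, rfl, rfl⟩ := h
      exact Or.inr (by simp [length_circMWord])
    | refl x => exact Or.inl rfl
    | symm _ ih =>
      rcases ih with rfl | ih
      · exact Or.inl rfl
      · exact Or.inr (by omega)
    | trans _ _ ih₁ ih₂ =>
      rcases ih₁ with rfl | ih₁
      · exact ih₂
      · rcases ih₂ with rfl | ih₂
        · exact Or.inr ih₁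
        · exact Or.inr (by omega)
    | mul _ _ ih₁ ih₂ =>
      simp only [FreeMonoid.toList_mul, List.length_append]
      rcases ih₁ with rfl | ih₁ <;> rcases ih₂ with rfl | ih₂
      · exact Or.inl rfl
      all_goals exact Or.inr (by omega)
  rcases key with h | h
  · exact h
  · omega

/-- Two words for the same element have the same first letter unless the Garside element
left-divides that element. -/
theorem head?_eq_or_circMDelta_dvd {m ℓ : ℕ} [NeZero m] {v w : FreeMonoid (ZMod m)}
    (h : PresentedMonoid.mk (circMRels m ℓ) v = PresentedMonoid.mk (circMRels m ℓ) w) :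
    v.toList.head? = w.toList.head? ∨
      circMDelta m ℓ ∣ PresentedMonoid.mk (circMRels m ℓ) v := by
  have h' := PresentedMonoid.mk_eq_mk_iff.1 h
  clear h
  induction h' with
  | of x y h =>
    obtain ⟨i, rfl, rfl⟩ := h
    exact Or.inr (circMS_length_eq_circMDelta m ℓ i).symm.dvd
  | refl x => exact Or.inl rfl
  | symm h ih =>
    rw [← PresentedMonoid.mk_eq_mk_iff.2 h]
    exact ih.imp_left Eq.symm
  | trans h _ ih₁ ih₂ =>
    rw [← PresentedMonoid.mk_eq_mk_iff.2 h] at ih₂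
    rcases ih₁ with ih₁ | ih₁
    · rwa [ih₁]
    · exact Or.inr ih₁
  | @mul v₁ w₁ v₂ w₂ h₁ _ ih₁ ih₂ =>
    rw [map_mul (PresentedMonoid.mk _)]
    rcases ih₁ with ih₁ | ih₁
    · rcases hv : v₁.toList with _ | ⟨a, l⟩
      · have hw : w₁.toList = [] := by simpa [hv] using ih₁.symm
        obtain rfl : v₁ = 1 := hv
        simpa [FreeMonoid.toList_mul, hw] using ih₂
      · rw [hv] at ih₁
        left
        simp [FreeMonoid.toList_mul, hv, List.head?_append, ← ih₁]
    · exact Or.inr (ih₁.mul_right _)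

/-- If neither of the simple elements `s(i,p)`, `s(i',p')` left-divides the other, then
their only common left-divisor is `1`, and `Δ` is their least common right-multiple. -/
theorem gcd_lcm_simples (m ℓ : ℕ) (hm : 0 < m) (hℓ : 0 < ℓ)
    (i i' : ZMod m) (p p' : ℕ) (hp : p ≤ ℓ) (hp' : p' ≤ ℓ)
    (h1 : ¬ ∃ c : CircularMonoid m ℓ, circMS m ℓ i p * c = circMS m ℓ i' p')
    (h2 : ¬ ∃ c : CircularMonoid m ℓ, circMS m ℓ i' p' * c = circMS m ℓ i p) :
    (∀ u : CircularMonoid m ℓ, (∃ c, u * c = circMS m ℓ i p) →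
      (∃ c, u * c = circMS m ℓ i' p') → u = 1) ∧
    ((∃ c, circMS m ℓ i p * c = circMDelta m ℓ) ∧
      (∃ c, circMS m ℓ i' p' * c = circMDelta m ℓ)) ∧
    (∀ x : CircularMonoid m ℓ, (∃ c, circMS m ℓ i p * c = x) →
      (∃ c, circMS m ℓ i' p' * c = x) → ∃ c, circMDelta m ℓ * c = x) := by
  have : NeZero m := ⟨hm.ne'⟩
  have hdvd : ∀ (j : ZMod m) {q : ℕ}, q ≤ ℓ → circMS m ℓ j q ∣ circMDelta m ℓ := fun j q hq =>
    circMS_length_eq_circMDelta m ℓ j ▸ circMS_dvd_circMS m ℓ j hq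
  replace h1 : ¬ circMS m ℓ i p ∣ circMS m ℓ i' p' := fun ⟨c, hc⟩ => h1 ⟨c, hc.symm⟩
  replace h2 : ¬ circMS m ℓ i' p' ∣ circMS m ℓ i p := fun ⟨c, hc⟩ => h2 ⟨c, hc.symm⟩
  have hne : i ≠ i' := by
    rintro rfl
    rcases le_total p p' with h | h
    · exact h1 (circMS_dvd_circMS m ℓ i h)
    · exact h2 (circMS_dvd_circMS m ℓ i h)
  have hp0 : 0 < p := Nat.pos_of_ne_zero fun h => h1 (by simp [h, circMS_zero])
  have hp0' : 0 < p' := Nat.pos_of_ne_zero fun h => h2 (by simp [h, circMS_zero])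
  have hpl : p < ℓ := lt_of_le_of_ne hp fun h =>
    h2 (by rw [h, circMS_length_eq_circMDelta]; exact hdvd i' hp')
  have hpl' : p' < ℓ := lt_of_le_of_ne hp' fun h =>
    h1 (by rw [h, circMS_length_eq_circMDelta]; exact hdvd i hp)
  refine ⟨?_, ⟨?_, ?_⟩, ?_⟩
  · rintro u ⟨c, hc⟩ ⟨c', hc'⟩
    obtain ⟨u, rfl⟩ := PresentedMonoid.surjective_mk u
    obtain ⟨c, rfl⟩ := PresentedMonoid.surjective_mk c
    obtain ⟨c', rfl⟩ := PresentedMonoid.surjective_mk c'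
    rw [← map_mul] at hc hc'
    have e := eq_of_mk_eq_of_length_lt hc (by rwa [length_circMWord])
    have e' := eq_of_mk_eq_of_length_lt hc' (by rwa [length_circMWord])
    rcases hu : u.toList with _ | ⟨a, l⟩
    · obtain rfl : u = 1 := hu
      exact map_one _
    · have hh := head?_circMWord m i hp0
      have hh' := head?_circMWord m i' hp0'
      rw [← e, FreeMonoid.toList_mul, hu] at hh
      rw [← e', FreeMonoid.toList_mul, hu] at hh'
      simp only [List.cons_append, List.head?_cons, Option.some.injEq] at hh hh'
      exact absurd (hh.symm.trans hh') hne
  · obtain ⟨c, hc⟩ := hdvd i hp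
    exact ⟨c, hc.symm⟩
  · obtain ⟨c, hc⟩ := hdvd i' hp'
    exact ⟨c, hc.symm⟩
  · rintro x ⟨c, rfl⟩ ⟨c', hc'⟩
    obtain ⟨c, rfl⟩ := PresentedMonoid.surjective_mk c
    obtain ⟨c', rfl⟩ := PresentedMonoid.surjective_mk c'
    rw [circMS, circMS, ← map_mul, ← map_mul] at hc'
    rw [circMS, ← map_mul]
    rcases head?_eq_or_circMDelta_dvd hc'.symm with h | ⟨d, hd⟩
    · simp only [FreeMonoid.toList_mul, List.head?_append, head?_circMWord m _ hp0,
        head?_circMWord m _ hp0', Option.some_or, Option.some.injEq] at h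
      exact absurd h hne
    · exact ⟨d, hd.symm⟩
end
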